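/- Fix j ∈ {1,2}, and for each α_j ∈ 𝓐_j let V_{j,α_j} : (ℝ³)^{𝓡_{3−j} × 𝓐_{3−j}} → ℝ be translation-invariant. Then for all x ∈ ℝ² and all γ_{3−j} ∈ Γ_{3−j}: (1/|Γ_j|) Σ_{α_j ∈ 𝓐_j} V_{j,α_j}( (Y_j(x, α_j) − Y_{3−j}(R_{3−j} + γ_{3−j}, α_{3−j}))_{R_{3−j} ∈ 𝓡_{3−j}, α_{3−j} ∈ 𝓐_{3−j}} ) = Ψ_j[u]({x}_𝓜, {x − γ_{3−j}}_{3−j}). Moreover, if x = R_j ∈ 𝓡_j and γ_{3−j} = 0, then this quantity equals Ψ_j[u]({R_j}_𝓜, D_{j→3−j} {R_j}_𝓜 ) interpreted via the stencil, i.e., it equals Φ̄_{j,0}[u]({R_j}_𝓜) where Φ̄_{j,0}[u](x) := Ψ_j[u](x, D_{j→3−j} x). -/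

import Mathlib

open scoped Real BigOperators
open MeasureTheory Filter Topology Matrix

noncomputable section

/-- The 2×2 rotation matrix through angle `φ`. -/
def Rot (φ : ℝ) : Matrix (Fin 2) (Fin 2) ℝ :=
  !![Real.cos φ, -Real.sin φ; Real.sin φ, Real.cos φ]

/-- Euclidean norm on `ℝ²`. -/
def norm2 (v : Fin 2 → ℝ) : ℝ := Real.sqrt (v 0 ^ 2 + v 1 ^ 2)

/-- Euclidean norm on `ℝ³`. -/
def norm3 (v : Fin 3 → ℝ) : ℝ := Real.sqrt (v 0 ^ 2 + v 1 ^ 2 + v 2 ^ 2)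

/-- Cast an integer vector to a real vector. -/
def iv (n : Fin 2 → ℤ) : Fin 2 → ℝ := fun i => (n i : ℝ)

/-- The lattice `M ℤ²`. -/
def lat (M : Matrix (Fin 2) (Fin 2) ℝ) : Set (Fin 2 → ℝ) :=
  {v | ∃ n : Fin 2 → ℤ, v = M.mulVec (iv n)}

/-- The unit cell `M [0,1)²`. -/
def cell (M : Matrix (Fin 2) (Fin 2) ℝ) : Set (Fin 2 → ℝ) :=
  {v | ∃ t : Fin 2 → ℝ, (∀ i, t i ∈ Set.Ico (0 : ℝ) 1) ∧ v = M.mulVec t}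

/-- The reciprocal matrix `2π M⁻ᵀ`. -/
def recip (M : Matrix (Fin 2) (Fin 2) ℝ) : Matrix (Fin 2) (Fin 2) ℝ :=
  (2 * π) • (M⁻¹)ᵀ

/-- A pair of lattices with reciprocal-lattice matrices `B1`, `B2` is incommensurate iff
`G₁ + G₂ = 0` with `G_k` in the respective reciprocal lattice implies `G₁ = G₂ = 0`. -/
def Incommensurate (B1 B2 : Matrix (Fin 2) (Fin 2) ℝ) : Prop :=
  ∀ G1 ∈ lat B1, ∀ G2 ∈ lat B2, G1 + G2 = 0 → G1 = 0 ∧ G2 = 0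

/-- Euclidean distance from `v ∈ ℝ²` to the integer lattice `ℤ²`. -/
def distZ2 (v : Fin 2 → ℝ) : ℝ := ⨅ m : Fin 2 → ℤ, norm2 (v - iv m)

/-- `θ` is a `(q,K,σ)`-Diophantine 2D rotation. -/
def IsDiophantine (A : Matrix (Fin 2) (Fin 2) ℝ) (q K σ θ : ℝ) : Prop :=
  ∀ n : Fin 2 → ℤ, n ≠ 0 →
    K / norm2 (iv n) ^ (2 * σ) ≤ distZ2 ((q • (Aᵀ * Rot θ * (A⁻¹)ᵀ)).mulVec (iv n)) ∧
    K / norm2 (iv n) ^ (2 * σ) ≤ distZ2 ((q⁻¹ • (Aᵀ * Rot (-θ) * (A⁻¹)ᵀ)).mulVec (iv n))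

/-- The moiré length scale ratio `ρ_𝓜`. -/
def rhoM (q θ : ℝ) : ℝ :=
  (Real.sqrt ((Real.sqrt q - (Real.sqrt q)⁻¹) ^ 2 + 4 * Real.sin (θ / 2) ^ 2))⁻¹

/-- Riemann zeta function (for real `s > 1`, via its Dirichlet series). -/
def zetaR (s : ℝ) : ℝ := ∑' n : ℕ, ((n : ℝ) + 1) ^ (-s)

/-- Operator (spectral) norm of a 2×2 real matrix w.r.t. the Euclidean norm. -/
def opNorm2 (M : Matrix (Fin 2) (Fin 2) ℝ) : ℝ :=
  ⨆ x : {x : Fin 2 → ℝ // norm2 x ≤ 1}, norm2 (M.mulVec x.1)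

/-- Embedding `ℝ² ↪ ℝ³`, `x ↦ (x, 0)`. -/
def emb (x : Fin 2 → ℝ) : Fin 3 → ℝ := ![x 0, x 1, 0]

/-- Japanese bracket `⟨x⟩ = (1 + |x|²)^{1/2}` on `ℝ³`. -/
def jap3 (x : Fin 3 → ℝ) : ℝ := Real.sqrt (1 + norm3 x ^ 2)

/-- The region `ℝ² × [−L, L] ⊆ ℝ³`. -/
def slab (L : ℝ) : Set (Fin 3 → ℝ) := {x | x 2 ∈ Set.Icc (-L) L}

/-- Euclidean inner product on `ℝ²`. -/
def dot2 (a b : Fin 2 → ℝ) : ℝ := ∑ i, a i * b i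

/-- The index box `⟦−N, N⟧²`. -/
def box (N : ℕ) : Finset (Fin 2 → ℤ) :=
  Finset.Icc (fun _ => -(N : ℤ)) (fun _ => (N : ℤ))

/-- The normalized Dirichlet kernel `Δ_N^j` of the lattice `A_j ℤ²`. -/
def Dir (Aj : Matrix (Fin 2) (Fin 2) ℝ) (N : ℕ) (G : Fin 2 → ℝ) : ℂ :=
  (((2 * N + 1 : ℝ)) ^ 2)⁻¹ •
    ∑ n ∈ box N, Complex.exp (Complex.I * (dot2 G (Aj.mulVec (iv n)) : ℝ))

/-- The sublattice-averaged generalized interlayer site potential `Ψ_j[u](x,y)` for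
many-body potentials; layer `a` plays the role of layer `j`, layer `b` that of `3−j`.
The stencil over `𝓡_{3−j} × 𝓐_{3−j}` is parametrized by `(Fin 2 → ℤ) × 𝓐b`,
with `R_{3−j} = A_b n`. -/
def PsiMB {𝓐a 𝓐b : Type} [Fintype 𝓐a]
    (Aa Ab : Matrix (Fin 2) (Fin 2) ℝ)
    (V : 𝓐a → (((Fin 2 → ℤ) × 𝓐b) → Fin 3 → ℝ) → ℝ)
    (τa : 𝓐a → Fin 2 → ℝ) (τb : 𝓐b → Fin 2 → ℝ)
    (ua : (Fin 2 → ℝ) → 𝓐a → Fin 3 → ℝ) (ub : (Fin 2 → ℝ) → 𝓐b → Fin 3 → ℝ)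
    (x y : Fin 2 → ℝ) : ℝ :=
  |Aa.det|⁻¹ *
    ∑ αa : 𝓐a, V αa (fun p =>
      emb y - emb (Ab.mulVec (iv p.1)) + emb (τa αa) - emb (τb p.2) +
        ua x αa - ub (x - y + Ab.mulVec (iv p.1)) p.2)

/-!
By translation invariance `V` may be evaluated on the stencil re-indexed by the vector of `𝓡_{3−j}`
that separates `x − γ` from a representative `y`, and by moiré periodicity `x` may be replaced by a
representative `z` in the arguments of `u`. Hence the site energy at `x` is `Ψ_j[u](z, y)` for *any*
`z ≡ x` modulo `𝓡_𝓜` and `y ≡ x − γ` modulo `𝓡_{3−j}`.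

If `x = A_j n` and `γ = 0`, then `y = D z` is such a representative: `D A_j = A_j − A_{3−j}`, so `x`
and `D x` differ by `A_{3−j} n`, while `D A_𝓜 = ±A_{3−j}` sends the moiré lattice into `𝓡_{3−j}`.
-/

section Disregistry

variable {ι R : Type*} [Fintype ι] [DecidableEq ι] [CommRing R] {A B : Matrix ι ι R}

/-- The disregistry matrix `D_{a→b} = I − B A⁻¹` of layers with matrices `A` and `B`: it maps a site
`A n` of layer `a` to its offset `A n − B n` from the corresponding site of layer `b`. -/
def disregistry (A B : Matrix ι ι R) : Matrix ι ι R := 1 - B * A⁻¹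

theorem disregistry_mul_self (hA : IsUnit A.det) : disregistry A B * A = A - B := by
  rw [disregistry, Matrix.sub_mul, Matrix.one_mul, Matrix.nonsing_inv_mul_cancel_right _ _ hA]

theorem disregistry_eq_neg_mul (hB : IsUnit B.det) :
    disregistry A B = -(B * (A⁻¹ - B⁻¹)) := by
  rw [disregistry, Matrix.mul_sub, Matrix.mul_nonsing_inv _ hB, neg_sub]

end Disregistry

section MoireMatrix

variable {A B M : Matrix (Fin 2) (Fin 2) ℝ}

/-- The moiré matrix `2π (2π A⁻ᵀ − 2π B⁻ᵀ)⁻ᵀ` of the layers with matrices `A` and `B`. -/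
def moireMatrix (A B : Matrix (Fin 2) (Fin 2) ℝ) : Matrix (Fin 2) (Fin 2) ℝ :=
  recip (recip A - recip B)

theorem transpose_mul_recip (hM : IsUnit M.det) : Mᵀ * recip M = (2 * π) • 1 := by
  rw [recip, Matrix.mul_smul, ← Matrix.transpose_mul, Matrix.nonsing_inv_mul _ hM,
    Matrix.transpose_one]

theorem recip_neg : recip (-M) = -recip M := by
  have hone : (-1 : Matrix (Fin 2) (Fin 2) ℝ)⁻¹ = -1 :=
    Matrix.inv_eq_left_inv (by rw [neg_mul_neg, mul_one])
  rw [recip, recip, ← mul_neg_one M, Matrix.mul_inv_rev, hone, neg_one_mul, Matrix.transpose_neg,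
    smul_neg]

theorem moireMatrix_swap : moireMatrix B A = -moireMatrix A B := by
  rw [moireMatrix, moireMatrix, ← recip_neg, neg_sub]

theorem inv_sub_inv_mul_moireMatrix (hM : IsUnit (recip A - recip B).det) :
    (A⁻¹ - B⁻¹) * moireMatrix A B = 1 := by
  have hsub : (recip A - recip B)ᵀ = (2 * π) • (A⁻¹ - B⁻¹) := by
    simp only [recip, Matrix.transpose_sub, Matrix.transpose_smul, Matrix.transpose_transpose,
      smul_sub]
  have hdual := transpose_mul_recip hM
  rw [hsub, Matrix.smul_mul] at hdual
  exact smul_right_injective _ Real.two_pi_pos.ne' hdual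

theorem disregistry_mul_moireMatrix (hB : IsUnit B.det)
    (hM : IsUnit (recip A - recip B).det) : disregistry A B * moireMatrix A B = -B := by
  rw [disregistry_eq_neg_mul hB, Matrix.neg_mul, Matrix.mul_assoc,
    inv_sub_inv_mul_moireMatrix hM, Matrix.mul_one]

end MoireMatrix

section Lattice

variable {A B M : Matrix (Fin 2) (Fin 2) ℝ}

theorem iv_add (m n : Fin 2 → ℤ) : iv (m + n) = iv m + iv n :=
  funext fun _ => Int.cast_add _ _

theorem iv_neg (n : Fin 2 → ℤ) : iv (-n) = -iv n :=
  funext fun _ => Int.cast_neg _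

theorem iv_sub (m n : Fin 2 → ℤ) : iv (m - n) = iv m - iv n :=
  funext fun _ => Int.cast_sub _ _

theorem lat_neg : lat (-M) = lat M := by
  ext v
  refine (Equiv.neg (Fin 2 → ℤ)).exists_congr fun n => ?_
  rw [Equiv.neg_apply, iv_neg, Matrix.mulVec_neg, Matrix.neg_mulVec]

theorem lat_moireMatrix_comm : lat (moireMatrix A B) = lat (moireMatrix B A) := by
  rw [moireMatrix_swap, lat_neg]

theorem sub_disregistry_mulVec_mem_lat (hA : IsUnit A.det) (hB : IsUnit B.det)
    (hM : IsUnit (recip A - recip B).det) {r z : Fin 2 → ℝ} (hr : r ∈ lat A)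
    (hz : r - z ∈ lat (moireMatrix A B)) : r - disregistry A B *ᵥ z ∈ lat B := by
  obtain ⟨n, rfl⟩ := hr
  obtain ⟨k, hk⟩ := hz
  refine ⟨n - k, ?_⟩
  calc A *ᵥ iv n - disregistry A B *ᵥ z
      = A *ᵥ iv n - (disregistry A B * A) *ᵥ iv n
          + (disregistry A B * moireMatrix A B) *ᵥ iv k := by
        rw [← Matrix.mulVec_mulVec, ← Matrix.mulVec_mulVec, ← hk, Matrix.mulVec_sub]
        abel
    _ = B *ᵥ iv (n - k) := by
        rw [disregistry_mul_self hA, disregistry_mul_moireMatrix hB hM, iv_sub,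
          Matrix.sub_mulVec, Matrix.neg_mulVec, Matrix.mulVec_sub]
        abel

/-- A function on `ℝ²` is periodic with respect to the lattice `M ℤ²`. -/
def IsLatPeriodic {E : Type*} (M : Matrix (Fin 2) (Fin 2) ℝ) (f : (Fin 2 → ℝ) → E) : Prop :=
  ∀ x, ∀ r ∈ lat M, f (x + r) = f x

theorem IsLatPeriodic.eq_of_sub_mem {E : Type*} {f : (Fin 2 → ℝ) → E} (hf : IsLatPeriodic M f)
    {x z : Fin 2 → ℝ} (h : x - z ∈ lat M) : f x = f z := by
  rw [← hf z _ h, add_sub_cancel]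

end Lattice

theorem det_Rot (φ : ℝ) : (Rot φ).det = 1 := by
  rw [Rot, Matrix.det_fin_two_of, neg_mul, sub_neg_eq_add, ← sq, ← sq, Real.cos_sq_add_sin_sq]

theorem isUnit_det_smul_Rot_mul {c : ℝ} (hc : c ≠ 0) (φ : ℝ) {A : Matrix (Fin 2) (Fin 2) ℝ}
    (hA : IsUnit A.det) : IsUnit (c • (Rot φ * A)).det := by
  rw [Matrix.det_smul, Matrix.det_mul, det_Rot, one_mul]
  exact (hc.isUnit.pow _).mul hA

section SitePotential

/-- A function of families indexed by `G × 𝓑`, with `G` the lattice of translations and `𝓑` the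
sublattice labels, is translation-invariant if shifting the lattice index does not change it. -/
def IsTranslationInvariant {G 𝓑 E F : Type*} [Add G] (W : (G × 𝓑 → E) → F) : Prop :=
  ∀ (a : G × 𝓑 → E) (m : G), W (fun p => a (p.1 + m, p.2)) = W a

/-- The deformed position `Y_j(x, α) = x + τ_j^{(α)} + u_j(x, α)` in `ℝ³`. -/
def deformedPos {𝓐 : Type*} (τ : 𝓐 → Fin 2 → ℝ) (u : (Fin 2 → ℝ) → 𝓐 → Fin 3 → ℝ)
    (x : Fin 2 → ℝ) (α : 𝓐) : Fin 3 → ℝ :=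
  emb x + emb (τ α) + u x α

/-- The interlayer energy of the site `x` of layer `a`, per unit area, when layer `b` is displaced
by `γ`: the sum over the sublattices of layer `a` of the many-body potentials `V`, evaluated at
the differences of the deformed positions. The lattice vector `R_b = A_b n` is encoded by `n`. -/
def sitePotential {𝓐a 𝓐b : Type*} [Fintype 𝓐a] (Aa Ab : Matrix (Fin 2) (Fin 2) ℝ)
    (V : 𝓐a → ((Fin 2 → ℤ) × 𝓐b → Fin 3 → ℝ) → ℝ)
    (τa : 𝓐a → Fin 2 → ℝ) (τb : 𝓐b → Fin 2 → ℝ)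
    (ua : (Fin 2 → ℝ) → 𝓐a → Fin 3 → ℝ) (ub : (Fin 2 → ℝ) → 𝓐b → Fin 3 → ℝ)
    (x γ : Fin 2 → ℝ) : ℝ :=
  |Aa.det|⁻¹ * ∑ αa, V αa fun p =>
    deformedPos τa ua x αa - deformedPos τb ub (Ab *ᵥ iv p.1 + γ) p.2

theorem emb_sub (x y : Fin 2 → ℝ) : emb (x - y) = emb x - emb y := by
  ext i; fin_cases i <;> simp [emb]

variable {𝓐a 𝓐b : Type} {τa : 𝓐a → Fin 2 → ℝ} {τb : 𝓐b → Fin 2 → ℝ}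
  {ua : (Fin 2 → ℝ) → 𝓐a → Fin 3 → ℝ} {ub : (Fin 2 → ℝ) → 𝓐b → Fin 3 → ℝ}
  {M Aa Ab : Matrix (Fin 2) (Fin 2) ℝ} {x γ y z : Fin 2 → ℝ}

theorem deformedPos_sub_deformedPos_add (hua : IsLatPeriodic M ua) (hub : IsLatPeriodic M ub)
    (hz : x - z ∈ lat M) {m : Fin 2 → ℤ} (hy : x - γ - y = Ab *ᵥ iv m)
    (αa : 𝓐a) (n : Fin 2 → ℤ) (αb : 𝓐b) :
    deformedPos τa ua x αa - deformedPos τb ub (Ab *ᵥ iv (n + m) + γ) αb =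
      emb y - emb (Ab *ᵥ iv n) + emb (τa αa) - emb (τb αb) +
        ua z αa - ub (z - y + Ab *ᵥ iv n) αb := by
  have hshift : Ab *ᵥ iv (n + m) + γ = Ab *ᵥ iv n + (x - y) := by
    rw [iv_add, Matrix.mulVec_add, ← hy]
    abel
  have hemb : emb x - emb (Ab *ᵥ iv (n + m) + γ) = emb y - emb (Ab *ᵥ iv n) := by
    rw [hshift, ← emb_sub, ← emb_sub]
    congr 1
    abel
  have hub' : ub (Ab *ᵥ iv (n + m) + γ) = ub (z - y + Ab *ᵥ iv n) := by
    refine hub.eq_of_sub_mem ?_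
    rw [hshift]
    convert hz using 1
    abel
  rw [deformedPos, deformedPos, hua.eq_of_sub_mem hz, hub', ← hemb]
  abel

variable [Fintype 𝓐a] {V : 𝓐a → ((Fin 2 → ℤ) × 𝓐b → Fin 3 → ℝ) → ℝ}

theorem sitePotential_eq_PsiMB (hua : IsLatPeriodic M ua) (hub : IsLatPeriodic M ub)
    (hV : ∀ αa, IsTranslationInvariant (V αa)) (hz : x - z ∈ lat M) (hy : x - γ - y ∈ lat Ab) :
    sitePotential Aa Ab V τa τb ua ub x γ = PsiMB Aa Ab V τa τb ua ub z y := by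
  obtain ⟨m, hm⟩ := hy
  rw [sitePotential, PsiMB]
  congr 1
  refine Finset.sum_congr rfl fun αa _ => ?_
  rw [← hV αa _ m]
  congr 1
  funext p
  exact deformedPos_sub_deformedPos_add hua hub hz hm αa p.1 p.2

end SitePotential

theorem site_potential_reduction_general {A₁ A₂ Aa Ab : Matrix (Fin 2) (Fin 2) ℝ}
    (hA₁ : IsUnit A₁.det) (hA₂ : IsUnit A₂.det) (hM : IsUnit (recip A₁ - recip A₂).det)
    (hcase : (Aa = A₁ ∧ Ab = A₂) ∨ (Aa = A₂ ∧ Ab = A₁))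
    {𝓐a 𝓐b : Type} [Fintype 𝓐a] {τa : 𝓐a → Fin 2 → ℝ} {τb : 𝓐b → Fin 2 → ℝ}
    {ua : (Fin 2 → ℝ) → 𝓐a → Fin 3 → ℝ} {ub : (Fin 2 → ℝ) → 𝓐b → Fin 3 → ℝ}
    (hua : IsLatPeriodic (moireMatrix A₁ A₂) ua) (hub : IsLatPeriodic (moireMatrix A₁ A₂) ub)
    {V : 𝓐a → ((Fin 2 → ℤ) × 𝓐b → Fin 3 → ℝ) → ℝ}
    (hV : ∀ αa, IsTranslationInvariant (V αa)) :
    (∀ x γ z y, x - z ∈ lat (moireMatrix A₁ A₂) → x - γ - y ∈ lat Ab →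
      sitePotential Aa Ab V τa τb ua ub x γ = PsiMB Aa Ab V τa τb ua ub z y) ∧
    (∀ x ∈ lat Aa, ∀ z, x - z ∈ lat (moireMatrix A₁ A₂) →
      sitePotential Aa Ab V τa τb ua ub x 0 =
        PsiMB Aa Ab V τa τb ua ub z (disregistry Aa Ab *ᵥ z)) := by
  refine ⟨fun x γ z y => sitePotential_eq_PsiMB hua hub hV, fun x hx z hz => ?_⟩
  refine sitePotential_eq_PsiMB hua hub hV hz ?_
  rw [sub_zero]
  obtain ⟨rfl, rfl⟩ | ⟨rfl, rfl⟩ := hcase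
  · exact sub_disregistry_mulVec_mem_lat hA₁ hA₂ hM hx hz
  · rw [← Matrix.isUnit_iff_isUnit_det, IsUnit.sub_iff, Matrix.isUnit_iff_isUnit_det] at hM
    rw [lat_moireMatrix_comm] at hz
    exact sub_disregistry_mulVec_mem_lat hA₂ hA₁ hM hx hz

/-- Lemma: lattice reduction formula for the interlayer site potential. -/
theorem site_potential_reduction (θ q : ℝ) (hq : 0 < q)
    (A A1 A2 B1 B2 BM AM : Matrix (Fin 2) (Fin 2) ℝ)
    (hA : IsUnit A.det)
    (hA1 : A1 = (Real.sqrt q)⁻¹ • (Rot (-(θ / 2)) * A))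
    (hA2 : A2 = Real.sqrt q • (Rot (θ / 2) * A))
    (hB1 : B1 = recip A1) (hB2 : B2 = recip A2)
    (hBM : BM = B1 - B2) (hBMinv : IsUnit BM.det)
    (hAM : AM = recip BM)
    (Aa Ab Dj : Matrix (Fin 2) (Fin 2) ℝ)
    (hcase : (Aa = A1 ∧ Ab = A2) ∨ (Aa = A2 ∧ Ab = A1))
    (hDj : Dj = 1 - Ab * Aa⁻¹)
    -- fractional-part maps {·}_𝓜 and {·}_{3−j}
    (FracM Fracb : (Fin 2 → ℝ) → (Fin 2 → ℝ))
    (hFracM : ∀ x : Fin 2 → ℝ, x - FracM x ∈ lat AM ∧ FracM x ∈ cell AM)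
    (hFracb : ∀ x : Fin 2 → ℝ, x - Fracb x ∈ lat Ab ∧ Fracb x ∈ cell Ab)
    (𝓐a 𝓐b : Type) [Fintype 𝓐a] [Fintype 𝓐b]
    (τa : 𝓐a → Fin 2 → ℝ) (τb : 𝓐b → Fin 2 → ℝ)
    (ua : (Fin 2 → ℝ) → 𝓐a → Fin 3 → ℝ) (ub : (Fin 2 → ℝ) → 𝓐b → Fin 3 → ℝ)
    -- u is 𝓡_𝓜-periodic
    (huaper : ∀ (x : Fin 2 → ℝ), ∀ rM ∈ lat AM, ∀ α, ua (x + rM) α = ua x α)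
    (hubper : ∀ (x : Fin 2 → ℝ), ∀ rM ∈ lat AM, ∀ α, ub (x + rM) α = ub x α)
    (V : 𝓐a → (((Fin 2 → ℤ) × 𝓐b) → Fin 3 → ℝ) → ℝ)
    -- V is translation-invariant
    (hVtrans : ∀ (αa : 𝓐a) (a : ((Fin 2 → ℤ) × 𝓐b) → Fin 3 → ℝ) (m : Fin 2 → ℤ),
      V αa (fun p => a (p.1 + m, p.2)) = V αa a) :
    -- general reduction formula
    (∀ (x : Fin 2 → ℝ), ∀ γb ∈ cell Ab,
      |Aa.det|⁻¹ *
          (∑ αa : 𝓐a, V αa (fun p =>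
            (emb x + emb (τa αa) + ua x αa) -
              (emb (Ab.mulVec (iv p.1) + γb) + emb (τb p.2) +
                ub (Ab.mulVec (iv p.1) + γb) p.2))) =
        PsiMB Aa Ab V τa τb ua ub (FracM x) (Fracb (x - γb))) ∧
    -- the case x = R_j ∈ 𝓡_j and γ_{3−j} = 0
    (∀ n : Fin 2 → ℤ,
      |Aa.det|⁻¹ *
          (∑ αa : 𝓐a, V αa (fun p =>
            (emb (Aa.mulVec (iv n)) + emb (τa αa) + ua (Aa.mulVec (iv n)) αa) -
              (emb (Ab.mulVec (iv p.1)) + emb (τb p.2) +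
                ub (Ab.mulVec (iv p.1)) p.2))) =
        PsiMB Aa Ab V τa τb ua ub (FracM (Aa.mulVec (iv n)))
          (Dj.mulVec (FracM (Aa.mulVec (iv n))))) := by
  subst hB1 hB2 hBM hAM hDj
  have hs : √q ≠ 0 := (Real.sqrt_pos.2 hq).ne'
  have hdet₁ : IsUnit A1.det := hA1 ▸ isUnit_det_smul_Rot_mul (inv_ne_zero hs) _ hA
  have hdet₂ : IsUnit A2.det := hA2 ▸ isUnit_det_smul_Rot_mul hs _ hA
  obtain ⟨hgen, hsite⟩ := site_potential_reduction_general (τa := τa) (τb := τb) hdet₁ hdet₂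
    hBMinv hcase (fun x r hr => funext (huaper x r hr)) (fun x r hr => funext (hubper x r hr))
    hVtrans
  refine ⟨fun x γb _ => hgen x γb _ _ (hFracM x).1 (hFracb (x - γb)).1, fun n => ?_⟩
  simpa only [sitePotential, deformedPos, disregistry, add_zero] using
    hsite (Aa *ᵥ iv n) ⟨n, rfl⟩ _ (hFracM (Aa *ᵥ iv n)).1

end
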